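/- Let φ be a divergence function, Φ the associated Young function defined by Φ(x) := 0 for x ∈ [0,1] and Φ(x) := max{0, φ(x)} for x > 1, and d := sup_{x ≥ 0} |φ(x) − Φ(x)|. Then for every integrable random variable X, the associated norms satisfy ‖X‖_{φ,β} < ∞ if and only if ‖X‖_{Φ,β} < ∞, and (β/(β+d))·‖X‖_{φ,β} ≤ ‖X‖_{Φ,β} ≤ ((β+d)/β)·‖X‖_{φ,β}. -/

import Mathlib

open MeasureTheory
open scoped ENNReal

noncomputable section

/-- A divergence function: convex, lower semicontinuous `φ : ℝ → ℝ ∪ {∞}` with `φ 1 = 0`,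
effective domain `[0, ∞)` and superlinear growth `φ x / x → ∞` as `x → ∞`. -/
structure IsDivergenceFunction (φ : ℝ → EReal) : Prop where
  convex : ∀ x y a b : ℝ, 0 < a → 0 < b → a + b = 1 →
    φ (a * x + b * y) ≤ (a : EReal) * φ x + (b : EReal) * φ y
  lsc : LowerSemicontinuous φ
  ne_bot : ∀ x : ℝ, φ x ≠ ⊥
  one : φ 1 = 0
  domain : ∀ x : ℝ, φ x ≠ ⊤ ↔ 0 ≤ x
  superlinear : ∀ M : ℝ, ∃ N : ℝ, ∀ x : ℝ, N ≤ x → ((M * x : ℝ) : EReal) ≤ φ x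

/-- The convex conjugate `ψ(y) = sup_z (y·z − φ(z))`, as an extended real number. -/
def psiE (φ : ℝ → EReal) (y : ℝ) : EReal := ⨆ z : ℝ, (((y * z : ℝ) : EReal) - φ z)

/-- The convex conjugate, as a real number (it is finite for divergence functions). -/
def psiR (φ : ℝ → EReal) (y : ℝ) : ℝ := (psiE φ y).toReal

open Classical in
/-- The objective `t (β + μ + E ψ(X/t − μ))` of the φ-divergence risk measure;
the value is `⊤` when `ψ(X/t − μ)` fails to be integrable. -/
def rhoObj {Ω : Type*} [MeasurableSpace Ω] (φ : ℝ → EReal) (β : ℝ) (P : Measure Ω)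
    (X : Ω → ℝ) (μ t : ℝ) : EReal :=
  if Integrable (fun ω => psiR φ (X ω / t - μ)) P then
    (((t * (β + μ + ∫ ω, psiR φ (X ω / t - μ) ∂P)) : ℝ) : EReal)
  else ⊤

/-- The φ-divergence risk measure `ρ_{φ,β}(X) = inf_{μ ∈ ℝ, t > 0} t (β + μ + E ψ(X/t − μ))`. -/
def rhoDiv {Ω : Type*} [MeasurableSpace Ω] (φ : ℝ → EReal) (β : ℝ) (P : Measure Ω)
    (X : Ω → ℝ) : EReal :=
  ⨅ (μ : ℝ) (t : ℝ) (_ : 0 < t), rhoObj φ β P X μ t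

open Classical in
/-- The Young function associated with a divergence function `φ`:
`Φ(x) = 0` on `[0,1]`, `Φ(x) = max{0, φ(x)}` for `x > 1`, `Φ(x) = ∞` for `x < 0`. -/
def YoungOf (φ : ℝ → EReal) : ℝ → EReal := fun x =>
  if x < 0 then ⊤ else if x ≤ 1 then 0 else max 0 (φ x)
variable {Ω : Type*} [MeasurableSpace Ω]

/-!
If `φ 1 ≤ 0` then `ψ y ≥ y`, so for `X ≥ 0` we have `E ψ(X/t - μ) ≥ -μ` and the objective
`t (β + μ + E ψ(X/t - μ))` is at least `t β`. Moving `φ` by at most `d` moves `ψ` by at most `d`,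
hence the objective by at most `t d`, which is at most `d / β` times the objective itself. The
additive distance between `φ` and `Φ` thus becomes the multiplicative factor `(β + d) / β`.
-/

theorem lowerSemicontinuous_psiE (φ : ℝ → EReal) : LowerSemicontinuous (psiE φ) := by
  refine lowerSemicontinuous_iSup fun z => Continuous.lowerSemicontinuous ?_
  induction φ z with
  | bot => simpa only [EReal.coe_sub_bot] using continuous_const
  | coe r => exact continuous_coe_real_ereal.comp (by fun_prop : Continuous fun y : ℝ => y * z - r)
  | top => simpa only [EReal.sub_top] using continuous_const

theorem measurable_psiR (φ : ℝ → EReal) : Measurable (psiR φ) :=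
  (lowerSemicontinuous_psiE φ).measurable.ereal_toReal

theorem psiE_le_psiE_add {φ χ : ℝ → EReal} {d : ℝ} (h : ∀ z, χ z ≤ φ z + d) (y : ℝ) :
    psiE φ y ≤ psiE χ y + d := by
  refine iSup_le fun z => ?_
  calc ((y * z : ℝ) : EReal) - φ z
      ≤ (y * z : ℝ) - (χ z - d) := EReal.sub_le_sub le_rfl (EReal.sub_le_of_le_add (h z))
    _ = (y * z : ℝ) - χ z + d := by
        induction χ z with
        | bot => rw [EReal.bot_sub, EReal.coe_sub_bot, EReal.top_add_coe]
        | coe r => norm_cast; ring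
        | top => simp
    _ ≤ psiE χ y + d := by
        gcongr
        exact le_iSup (fun z : ℝ => ((y * z : ℝ) : EReal) - χ z) z

theorem coe_le_psiE {φ : ℝ → EReal} (h1 : φ 1 ≤ 0) (y : ℝ) : (y : EReal) ≤ psiE φ y := by
  calc (y : EReal) = (y * 1 : ℝ) - 0 := by simp
    _ ≤ (y * 1 : ℝ) - φ 1 := EReal.sub_le_sub le_rfl h1
    _ ≤ psiE φ y := le_iSup (fun z : ℝ => ((y * z : ℝ) : EReal) - φ z) 1

theorem psiE_ne_bot {φ : ℝ → EReal} (h1 : φ 1 ≤ 0) (y : ℝ) : psiE φ y ≠ ⊥ :=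
  ne_bot_of_le_ne_bot (EReal.coe_ne_bot y) (coe_le_psiE h1 y)

theorem le_psiR {φ : ℝ → EReal} (h1 : φ 1 ≤ 0) {y : ℝ} (hfin : psiE φ y ≠ ⊤) :
    y ≤ psiR φ y :=
  EReal.toReal_le_toReal (coe_le_psiE h1 y) (EReal.coe_ne_bot y) hfin

theorem neg_le_psiR_div_sub {φ : ℝ → EReal} (h1 : φ 1 ≤ 0) {x t μ : ℝ} (hx : 0 ≤ x) (ht : 0 < t)
    (hfin : psiE φ (x / t - μ) ≠ ⊤) : -μ ≤ psiR φ (x / t - μ) := by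
  linarith [le_psiR h1 hfin, div_nonneg hx ht.le]

theorem psiE_ne_top_of_le_add {φ χ : ℝ → EReal} {d : ℝ} (h : ∀ z, χ z ≤ φ z + d) {y : ℝ}
    (hfin : psiE χ y ≠ ⊤) : psiE φ y ≠ ⊤ :=
  ne_top_of_le_ne_top (EReal.add_ne_top hfin (EReal.coe_ne_top d)) (psiE_le_psiE_add h y)

theorem psiR_le_psiR_add {φ χ : ℝ → EReal} {d : ℝ} (hφ1 : φ 1 ≤ 0) (hχ1 : χ 1 ≤ 0)
    (h : ∀ z, χ z ≤ φ z + d) {y : ℝ} (hfin : psiE χ y ≠ ⊤) : psiR φ y ≤ psiR χ y + d := by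
  have hle := EReal.toReal_le_toReal (psiE_le_psiE_add h y) (psiE_ne_bot hφ1 y)
    (EReal.add_ne_top hfin (EReal.coe_ne_top d))
  rwa [EReal.toReal_add hfin (psiE_ne_bot hχ1 y) (EReal.coe_ne_top d) (EReal.coe_ne_bot d),
    EReal.toReal_coe] at hle

section Risk

variable {P : Measure Ω} {φ χ : ℝ → EReal} {X : Ω → ℝ} {β d t : ℝ}

theorem integrable_psiR_of_le_add [IsFiniteMeasure P] (hφ1 : φ 1 ≤ 0) (hχ1 : χ 1 ≤ 0)
    (hfin : ∀ y, psiE χ y ≠ ⊤) (h : ∀ z, χ z ≤ φ z + d) (hX : AEMeasurable X P)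
    (hX0 : 0 ≤ᵐ[P] X) (ht : 0 < t) {μ : ℝ}
    (hi : Integrable (fun ω => psiR χ (X ω / t - μ)) P) :
    Integrable (fun ω => psiR φ (X ω / t - μ)) P := by
  refine integrable_of_le_of_le
    ((measurable_psiR φ).comp_aemeasurable ((hX.div_const t).sub_const μ)).aestronglyMeasurable
    ?_ (.of_forall fun ω => psiR_le_psiR_add hφ1 hχ1 h (hfin _)) (integrable_const (-μ))
    (hi.add (integrable_const d))
  filter_upwards [hX0] with ω hω
  exact neg_le_psiR_div_sub hφ1 hω ht (psiE_ne_top_of_le_add h (hfin _))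

variable [IsProbabilityMeasure P]

theorem neg_le_integral_psiR (hφ1 : φ 1 ≤ 0) (hfin : ∀ y, psiE φ y ≠ ⊤) (hX0 : 0 ≤ᵐ[P] X)
    (ht : 0 < t) {μ : ℝ} (hi : Integrable (fun ω => psiR φ (X ω / t - μ)) P) :
    -μ ≤ ∫ ω, psiR φ (X ω / t - μ) ∂P := by
  calc -μ = ∫ _, -μ ∂P := by simp
    _ ≤ ∫ ω, psiR φ (X ω / t - μ) ∂P := by
        refine integral_mono_ae (integrable_const _) hi ?_
        filter_upwards [hX0] with ω hω using neg_le_psiR_div_sub hφ1 hω ht (hfin _)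

theorem integral_psiR_le_add (hφ1 : φ 1 ≤ 0) (hχ1 : χ 1 ≤ 0) (hfin : ∀ y, psiE χ y ≠ ⊤)
    (h : ∀ z, χ z ≤ φ z + d) {Y : Ω → ℝ} (hiφ : Integrable (fun ω => psiR φ (Y ω)) P)
    (hiχ : Integrable (fun ω => psiR χ (Y ω)) P) :
    ∫ ω, psiR φ (Y ω) ∂P ≤ ∫ ω, psiR χ (Y ω) ∂P + d := by
  calc ∫ ω, psiR φ (Y ω) ∂P ≤ ∫ ω, (psiR χ (Y ω) + d) ∂P :=
        integral_mono hiφ (hiχ.add (integrable_const d)) fun ω =>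
          psiR_le_psiR_add hφ1 hχ1 h (hfin _)
    _ = ∫ ω, psiR χ (Y ω) ∂P + d := by
        rw [integral_add hiχ (integrable_const d), integral_const, probReal_univ, one_smul]

theorem mul_rhoObj_le_rhoObj (hβ : 0 < β) (hd : 0 ≤ d) (hφ1 : φ 1 ≤ 0) (hχ1 : χ 1 ≤ 0)
    (hfin : ∀ y, psiE χ y ≠ ⊤) (h : ∀ z, χ z ≤ φ z + d) (hX : AEMeasurable X P)
    (hX0 : 0 ≤ᵐ[P] X) (ht : 0 < t) (μ : ℝ) :
    ((β / (β + d) : ℝ) : EReal) * rhoObj φ β P X μ t ≤ rhoObj χ β P X μ t := by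
  by_cases hiχ : Integrable (fun ω => psiR χ (X ω / t - μ)) P
  swap
  · simp only [rhoObj, if_neg hiχ, le_top]
  have hiφ := integrable_psiR_of_le_add hφ1 hχ1 hfin h hX hX0 ht hiχ
  have hshift := integral_psiR_le_add hφ1 hχ1 hfin h hiφ hiχ
  have hlower := neg_le_integral_psiR hχ1 hfin hX0 ht hiχ
  rw [rhoObj, rhoObj, if_pos hiφ, if_pos hiχ, ← EReal.coe_mul, EReal.coe_le_coe_iff,
    div_mul_eq_mul_div, div_le_iff₀ (by positivity)]
  set A := ∫ ω, psiR φ (X ω / t - μ) ∂P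
  set B := ∫ ω, psiR χ (X ω / t - μ) ∂P
  calc β * (t * (β + μ + A)) ≤ β * (t * (β + μ + (B + d))) := by gcongr
    _ = t * (β * (β + d) + β * (μ + B)) := by ring
    _ ≤ t * (β * (β + d) + (β + d) * (μ + B)) := by
        have : 0 ≤ μ + B := by linarith
        gcongr
        linarith
    _ = t * (β + μ + B) * (β + d) := by ring

theorem mul_rhoDiv_le_rhoDiv (hβ : 0 < β) (hd : 0 ≤ d) (hφ1 : φ 1 ≤ 0) (hχ1 : χ 1 ≤ 0)
    (hfin : ∀ y, psiE χ y ≠ ⊤) (h : ∀ z, χ z ≤ φ z + d) (hX : AEMeasurable X P)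
    (hX0 : 0 ≤ᵐ[P] X) :
    ((β / (β + d) : ℝ) : EReal) * rhoDiv φ β P X ≤ rhoDiv χ β P X := by
  refine le_iInf fun μ => le_iInf₂ fun t ht => ?_
  calc ((β / (β + d) : ℝ) : EReal) * rhoDiv φ β P X
      ≤ ((β / (β + d) : ℝ) : EReal) * rhoObj φ β P X μ t := by
        have hpos : 0 ≤ β / (β + d) := by positivity
        exact mul_le_mul_of_nonneg_left ((iInf_le _ μ).trans (iInf₂_le t ht))
          (EReal.coe_nonneg.2 hpos)
    _ ≤ rhoObj χ β P X μ t := mul_rhoObj_le_rhoObj hβ hd hφ1 hχ1 hfin h hX hX0 ht μ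

end Risk

theorem ne_top_of_coe_mul_le {c : ℝ} (hc : 0 < c) {a b : EReal} (h : (c : EReal) * a ≤ b)
    (hb : b ≠ ⊤) : a ≠ ⊤ := by
  rintro rfl
  rw [EReal.coe_mul_top_of_pos hc] at h
  exact hb (top_le_iff.1 h)

theorem le_coe_inv_mul_of_coe_mul_le {c : ℝ} (hc : 0 < c) {a b : EReal}
    (h : (c : EReal) * a ≤ b) : a ≤ ((c⁻¹ : ℝ) : EReal) * b := by
  calc a = ((c⁻¹ : ℝ) : EReal) * (c * a) := by
        rw [← mul_assoc, ← EReal.coe_mul, inv_mul_cancel₀ hc.ne', EReal.coe_one, one_mul]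
    _ ≤ ((c⁻¹ : ℝ) : EReal) * b :=
        mul_le_mul_of_nonneg_left h (EReal.coe_nonneg.2 (inv_pos.2 hc).le)

theorem le_add_coe_of_abs_toReal_sub_le {a b : EReal} {d : ℝ} (ha : a ≠ ⊤) (hb : b ≠ ⊥)
    (h : |a.toReal - b.toReal| ≤ d) : a ≤ b + d := by
  induction a with
  | bot => exact bot_le
  | top => exact absurd rfl ha
  | coe r =>
    induction b with
    | bot => exact absurd rfl hb
    | top => simp
    | coe s =>
      rw [EReal.toReal_coe, EReal.toReal_coe] at h
      rw [← EReal.coe_add, EReal.coe_le_coe_iff]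
      linarith [(abs_le.1 h).2]

namespace IsDivergenceFunction

variable {φ : ℝ → EReal}

theorem eq_top_of_neg (hφ : IsDivergenceFunction φ) {x : ℝ} (hx : x < 0) : φ x = ⊤ :=
  not_not.1 fun h => hx.not_ge ((hφ.domain x).1 h)

theorem coe_toReal (hφ : IsDivergenceFunction φ) {x : ℝ} (hx : 0 ≤ x) :
    ((φ x).toReal : EReal) = φ x :=
  EReal.coe_toReal ((hφ.domain x).2 hx) (hφ.ne_bot x)

theorem exists_coe_neg_le (hφ : IsDivergenceFunction φ) :
    ∃ C : ℝ, ∀ x, ((-C : ℝ) : EReal) ≤ φ x := by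
  obtain ⟨N, hN⟩ := hφ.superlinear 0
  obtain ⟨x₀, hx₀, hmin⟩ := (hφ.lsc.lowerSemicontinuousOn (Set.Icc 0 (max N 0))).exists_isMinOn
    (Set.nonempty_Icc.2 (le_max_right N 0)) isCompact_Icc
  refine ⟨|(φ x₀).toReal|, fun x => ?_⟩
  rcases lt_or_ge x 0 with hx | hx
  · exact hφ.eq_top_of_neg hx ▸ le_top
  rcases le_total x (max N 0) with hxN | hxN
  · calc ((-|(φ x₀).toReal| : ℝ) : EReal) ≤ (φ x₀).toReal := by exact_mod_cast neg_abs_le _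
      _ = φ x₀ := hφ.coe_toReal hx₀.1
      _ ≤ φ x := hmin ⟨hx, hxN⟩
  · calc ((-|(φ x₀).toReal| : ℝ) : EReal) ≤ (0 * x : ℝ) := by
          rw [zero_mul]; exact_mod_cast neg_nonpos.2 (abs_nonneg _)
      _ ≤ φ x := hN x ((le_max_left N 0).trans hxN)

theorem toReal_le_abs_toReal_zero (hφ : IsDivergenceFunction φ) {x : ℝ} (hx0 : 0 ≤ x)
    (hx1 : x ≤ 1) : (φ x).toReal ≤ |(φ 0).toReal| := by
  rcases hx0.eq_or_lt with rfl | hx0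
  · exact le_abs_self _
  rcases hx1.eq_or_lt with rfl | hx1
  · simp [hφ.one]
  have hconv : (φ x).toReal ≤ (1 - x) * (φ 0).toReal := by
    have h := hφ.convex 0 1 (1 - x) x (by linarith) hx0 (by ring)
    rwa [hφ.one, show (1 - x) * 0 + x * 1 = x by ring, mul_zero, add_zero,
      ← hφ.coe_toReal hx0.le, ← hφ.coe_toReal le_rfl, ← EReal.coe_mul,
      EReal.coe_le_coe_iff] at h
  calc (φ x).toReal ≤ (1 - x) * (φ 0).toReal := hconv
    _ ≤ (1 - x) * |(φ 0).toReal| :=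
        mul_le_mul_of_nonneg_left (le_abs_self _) (sub_nonneg.2 hx1.le)
    _ ≤ |(φ 0).toReal| := mul_le_of_le_one_left (abs_nonneg _) (by linarith)

theorem psiE_ne_top (hφ : IsDivergenceFunction φ) (y : ℝ) : psiE φ y ≠ ⊤ := by
  obtain ⟨C, hC⟩ := hφ.exists_coe_neg_le
  obtain ⟨N, hN⟩ := hφ.superlinear y
  suffices h : psiE φ y ≤ (max 0 (|y| * |N| + C) : ℝ) from
    ne_top_of_le_ne_top (EReal.coe_ne_top _) h
  refine iSup_le fun z => ?_
  rcases lt_or_ge z 0 with hz | hz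
  · rw [hφ.eq_top_of_neg hz, EReal.sub_top]
    exact bot_le
  specialize hC z
  specialize hN z
  rw [← hφ.coe_toReal hz] at hC hN ⊢
  rw [← EReal.coe_sub, EReal.coe_le_coe_iff]
  rw [EReal.coe_le_coe_iff] at hC hN
  rcases le_total N z with hNz | hzN
  · exact le_max_of_le_left (sub_nonpos.2 (hN hNz))
  · have hyz : y * z ≤ |y| * |N| :=
      mul_le_mul (le_abs_self y) (hzN.trans (le_abs_self N)) hz (abs_nonneg y)
    exact le_max_of_le_right (by linarith)

end IsDivergenceFunction

theorem youngOf_of_neg (φ : ℝ → EReal) {x : ℝ} (hx : x < 0) : YoungOf φ x = ⊤ := if_pos hx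

theorem youngOf_of_mem_Icc (φ : ℝ → EReal) {x : ℝ} (hx : x ∈ Set.Icc 0 1) : YoungOf φ x = 0 := by
  rw [YoungOf, if_neg hx.1.not_gt, if_pos hx.2]

theorem youngOf_of_one_lt (φ : ℝ → EReal) {x : ℝ} (hx : 1 < x) : YoungOf φ x = max 0 (φ x) := by
  rw [YoungOf, if_neg (zero_lt_one.trans hx).not_gt, if_neg hx.not_ge]

theorem youngOf_nonneg (φ : ℝ → EReal) (x : ℝ) : 0 ≤ YoungOf φ x := by
  rw [YoungOf]
  split_ifs
  exacts [le_top, le_rfl, le_max_left _ _]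

theorem youngOf_ne_bot (φ : ℝ → EReal) (x : ℝ) : YoungOf φ x ≠ ⊥ :=
  ne_bot_of_le_ne_bot EReal.zero_ne_bot (youngOf_nonneg φ x)

namespace IsDivergenceFunction

variable {φ : ℝ → EReal}

theorem youngOf_ne_top (hφ : IsDivergenceFunction φ) {x : ℝ} (hx : 0 ≤ x) : YoungOf φ x ≠ ⊤ := by
  rcases le_or_gt x 1 with hx1 | hx1
  · rw [youngOf_of_mem_Icc φ ⟨hx, hx1⟩]
    exact EReal.zero_ne_top
  · rw [youngOf_of_one_lt φ hx1]
    exact (max_lt EReal.zero_lt_top ((hφ.domain x).2 hx).lt_top).ne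

theorem toReal_youngOf_of_one_lt (hφ : IsDivergenceFunction φ) {x : ℝ} (hx : 1 < x) :
    (YoungOf φ x).toReal = max 0 (φ x).toReal := by
  rw [youngOf_of_one_lt φ hx, ← hφ.coe_toReal (zero_le_one.trans hx.le), EReal.toReal_coe,
    ← EReal.coe_zero,
    ← EReal.coe_strictMono.monotone.map_max, EReal.toReal_coe]

theorem bddAbove_abs_sub_youngOf (hφ : IsDivergenceFunction φ) :
    BddAbove {r : ℝ | ∃ x : ℝ, 0 ≤ x ∧ r = |(φ x).toReal - (YoungOf φ x).toReal|} := by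
  obtain ⟨C, hC⟩ := hφ.exists_coe_neg_le
  have hC0 : -C ≤ 0 := by simpa only [hφ.one, EReal.coe_nonpos] using hC 1
  refine ⟨max C |(φ 0).toReal|, ?_⟩
  rintro _ ⟨x, hx, rfl⟩
  have hlower : -C ≤ (φ x).toReal := by
    rw [← EReal.coe_le_coe_iff, hφ.coe_toReal hx]
    exact hC x
  rcases le_or_gt x 1 with hx1 | hx1
  · rw [youngOf_of_mem_Icc φ ⟨hx, hx1⟩, EReal.toReal_zero, sub_zero]
    exact abs_le.2 ⟨(neg_le_neg (le_max_left C _)).trans hlower,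
      (hφ.toReal_le_abs_toReal_zero hx hx1).trans (le_max_right C _)⟩
  · refine le_max_of_le_left ?_
    rw [hφ.toReal_youngOf_of_one_lt hx1, abs_le]
    constructor
    · rcases max_cases 0 (φ x).toReal with h | h <;> linarith
    · linarith [le_max_right 0 (φ x).toReal]

theorem abs_sub_youngOf_le_sSup (hφ : IsDivergenceFunction φ) {x : ℝ} (hx : 0 ≤ x) :
    |(φ x).toReal - (YoungOf φ x).toReal| ≤
      sSup {r : ℝ | ∃ x : ℝ, 0 ≤ x ∧ r = |(φ x).toReal - (YoungOf φ x).toReal|} :=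
  le_csSup hφ.bddAbove_abs_sub_youngOf ⟨x, hx, rfl⟩

theorem le_youngOf_add (hφ : IsDivergenceFunction φ) {d : ℝ}
    (hd : ∀ x, 0 ≤ x → |(φ x).toReal - (YoungOf φ x).toReal| ≤ d) (x : ℝ) :
    φ x ≤ YoungOf φ x + d := by
  rcases lt_or_ge x 0 with hx | hx
  · rw [youngOf_of_neg φ hx, EReal.top_add_coe]
    exact le_top
  · exact le_add_coe_of_abs_toReal_sub_le ((hφ.domain x).2 hx) (youngOf_ne_bot φ x) (hd x hx)

theorem youngOf_le_add (hφ : IsDivergenceFunction φ) {d : ℝ}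
    (hd : ∀ x, 0 ≤ x → |(φ x).toReal - (YoungOf φ x).toReal| ≤ d) (x : ℝ) :
    YoungOf φ x ≤ φ x + d := by
  rcases lt_or_ge x 0 with hx | hx
  · rw [hφ.eq_top_of_neg hx, EReal.top_add_coe]
    exact le_top
  · exact le_add_coe_of_abs_toReal_sub_le (hφ.youngOf_ne_top hx) (hφ.ne_bot x)
      (abs_sub_comm (φ x).toReal _ ▸ hd x hx)

end IsDivergenceFunction

theorem youngOf_norm_equivalence_general (P : Measure Ω) [IsProbabilityMeasure P]
    (φ : ℝ → EReal) (hφ : IsDivergenceFunction φ) (β : ℝ) (hβ : 0 < β)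
    (X : Ω → ℝ) (hX : AEMeasurable X P)
    (d : ℝ) (hd : d = sSup {r : ℝ | ∃ x : ℝ, 0 ≤ x ∧
      r = |(φ x).toReal - (YoungOf φ x).toReal|}) :
    (rhoDiv φ β P (fun ω => |X ω|) ≠ ⊤ ↔ rhoDiv (YoungOf φ) β P (fun ω => |X ω|) ≠ ⊤) ∧
    ((β / (β + d) : ℝ) : EReal) * rhoDiv φ β P (fun ω => |X ω|) ≤
      rhoDiv (YoungOf φ) β P (fun ω => |X ω|) ∧
    rhoDiv (YoungOf φ) β P (fun ω => |X ω|) ≤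
      (((β + d) / β : ℝ) : EReal) * rhoDiv φ β P (fun ω => |X ω|) := by
  have hdist : ∀ x, 0 ≤ x → |(φ x).toReal - (YoungOf φ x).toReal| ≤ d := fun x hx =>
    hd ▸ hφ.abs_sub_youngOf_le_sSup hx
  have hd0 : 0 ≤ d := (abs_nonneg _).trans (hdist 0 le_rfl)
  have hΦ1 : YoungOf φ 1 ≤ 0 := (youngOf_of_mem_Icc φ ⟨zero_le_one, le_rfl⟩).le
  have hΦfin : ∀ y, psiE (YoungOf φ) y ≠ ⊤ := fun y =>
    psiE_ne_top_of_le_add (hφ.le_youngOf_add hdist) (hφ.psiE_ne_top y)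
  have habs : AEMeasurable (fun ω => |X ω|) P := hX.norm
  have habs0 : 0 ≤ᵐ[P] fun ω => |X ω| := .of_forall fun ω => abs_nonneg (X ω)
  have hφΦ := mul_rhoDiv_le_rhoDiv hβ hd0 hφ.one.le hΦ1 hΦfin (hφ.youngOf_le_add hdist) habs habs0
  have hΦφ := mul_rhoDiv_le_rhoDiv hβ hd0 hΦ1 hφ.one.le hφ.psiE_ne_top (hφ.le_youngOf_add hdist)
    habs habs0
  have hpos : 0 < β / (β + d) := by positivity
  refine ⟨⟨ne_top_of_coe_mul_le hpos hΦφ, ne_top_of_coe_mul_le hpos hφΦ⟩, hφΦ, ?_⟩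
  rw [← inv_div β (β + d)]
  exact le_coe_inv_mul_of_coe_mul_le hpos hΦφ

/-- The norms `‖X‖_{φ,β}` and `‖X‖_{Φ,β}` are simultaneously finite, and are equivalent
with constants `β/(β+d)` and `(β+d)/β`, where `d = sup_{x ≥ 0} |φ(x) − Φ(x)|`. -/
theorem youngOf_norm_equivalence (P : Measure Ω) [IsProbabilityMeasure P]
    (φ : ℝ → EReal) (hφ : IsDivergenceFunction φ) (β : ℝ) (hβ : 0 < β)
    (X : Ω → ℝ) (hX : Integrable X P)
    (d : ℝ) (hd : d = sSup {r : ℝ | ∃ x : ℝ, 0 ≤ x ∧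
      r = |(φ x).toReal - (YoungOf φ x).toReal|}) :
    (rhoDiv φ β P (fun ω => |X ω|) ≠ ⊤ ↔ rhoDiv (YoungOf φ) β P (fun ω => |X ω|) ≠ ⊤) ∧
    ((β / (β + d) : ℝ) : EReal) * rhoDiv φ β P (fun ω => |X ω|) ≤
      rhoDiv (YoungOf φ) β P (fun ω => |X ω|) ∧
    rhoDiv (YoungOf φ) β P (fun ω => |X ω|) ≤
      (((β + d) / β : ℝ) : EReal) * rhoDiv φ β P (fun ω => |X ω|) :=
  youngOf_norm_equivalence_general P φ hφ β hβ X hX.aemeasurable d hd
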